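/- Let μ be a regular uncountable cardinal, B a complete Boolean algebra satisfying the μ-chain condition, and D an ultrafilter on B that is not ℵ₁-complete. Then there exists a map f from the finite subsets of μ to D satisfying f(v) ≤ f(u) whenever u ⊆ v, such that no family ⟨b_α : α < μ⟩ of elements of D satisfies ⨅_{α ∈ u} b_α ≤ f(u) for every nonempty finite u ⊆ μ. -/

import Mathlib

/-!
If `c` is a decreasing sequence in the filter without a lower bound in the filter, then
`f u = c |u|` has no multiplicative refinement. Suppose `b` were one. Take a maximal antichain `A`
among the nonzero elements that meet only finitely many `b i`. By the chain condition `|A|` is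
smaller than the index set, so some `b i` meets no element of `A`; hence every nonzero `y ≤ b i`
meets infinitely many `b j`. Choose `n` with `b i ≰ c n` and start from `y = b i \ c n`: meeting
with one new `b j` at a time, `y` stays nonzero below `n + 1` of them, whereas their meet lies
below `c (n + 1) ≤ c n`.
-/

open Cardinal Order

universe u

/-- The `κ`-chain condition (`κ`-c.c.): every antichain, i.e. every pairwise disjoint set of nonzero
elements, has fewer than `κ` elements. With `Disjoint` in place of `⊓` it makes sense without
meets. -/
def ChainCondition (P : Type u) [PartialOrder P] [OrderBot P] (κ : Cardinal.{u}) : Prop :=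
  ∀ A : Set P, (∀ a ∈ A, a ≠ ⊥) → A.Pairwise Disjoint → #A < κ

theorem chainCondition_iff_inf_eq_bot {P : Type u} [SemilatticeInf P] [OrderBot P]
    {κ : Cardinal.{u}} :
    ChainCondition P κ ↔
      ∀ A : Set P, (∀ a ∈ A, a ≠ ⊥) → A.Pairwise (fun x y => x ⊓ y = ⊥) → #A < κ := by
  simp only [ChainCondition, ← disjoint_iff]

theorem exists_pairwise_disjoint_subset_forall_not_disjoint {P : Type*}
    [PartialOrder P] [OrderBot P] (S : Set P) :
    ∃ A ⊆ S, A.Pairwise Disjoint ∧ ∀ x ∈ S, x ≠ ⊥ → ∃ a ∈ A, ¬ Disjoint x a := by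
  obtain ⟨A, hA⟩ : ∃ A, Maximal (· ∈ {A : Set P | A ⊆ S ∧ A.Pairwise Disjoint}) A := by
    refine zorn_subset _ fun K hK hchain => ⟨⋃₀ K, ⟨?_, ?_⟩, fun s => Set.subset_sUnion_of_mem⟩
    · exact Set.sUnion_subset fun s hs => (hK hs).1
    · exact (Set.pairwise_sUnion hchain.directedOn).2 fun s hs => (hK hs).2
  refine ⟨A, hA.prop.1, hA.prop.2, fun x hxS hx => ?_⟩
  by_contra! hdisj
  have hxA : x ∈ A :=
    hA.le_of_ge ⟨Set.insert_subset hxS hA.prop.1,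
      hA.prop.2.insert fun a ha _ => ⟨hdisj a ha, (hdisj a ha).symm⟩⟩
      (Set.subset_insert x A) (Set.mem_insert x A)
  exact hx (disjoint_self.1 (hdisj x hxA))

theorem ChainCondition.exists_forall_le_infinite_not_disjoint {P ι : Type u} [PartialOrder P]
    [OrderBot P] [Infinite ι] (hcc : ChainCondition P #ι) (b : ι → P) :
    ∃ i, ∀ y ≤ b i, y ≠ ⊥ → {j | ¬ Disjoint y (b j)}.Infinite := by
  obtain ⟨A, hAS, hA, hAmax⟩ := exists_pairwise_disjoint_subset_forall_not_disjoint
    {y | y ≠ ⊥ ∧ {j | ¬ Disjoint y (b j)}.Finite}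
  obtain ⟨i, hi⟩ : ∃ i, ∀ a ∈ A, Disjoint a (b i) := by
    by_contra! hmeet
    choose a haA ha using hmeet
    obtain ⟨x, hx⟩ := exists_infinite_fiber (fun i => (⟨a i, haA i⟩ : A))
      (hcc A (fun y hy => (hAS hy).1) hA)
    refine (Set.infinite_coe_iff.1 hx) ((hAS x.2).2.subset ?_)
    rintro j rfl
    exact ha j
  refine ⟨i, fun y hyi hy hfin => ?_⟩
  obtain ⟨a, haA, hya⟩ := hAmax y ⟨hy, hfin⟩ hy
  exact hya ((hi a haA).symm.mono_left hyi)

theorem exists_card_eq_not_disjoint_inf {P ι : Type*} [SemilatticeInf P] [BoundedOrder P]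
    {b : ι → P} {x : P} (hx : x ≠ ⊥)
    (hinf : ∀ y ≤ x, y ≠ ⊥ → {j | ¬ Disjoint y (b j)}.Infinite) (n : ℕ) :
    ∃ u : Finset ι, u.card = n ∧ ¬ Disjoint x (u.inf b) := by
  classical
  induction n with
  | zero => exact ⟨∅, rfl, by simpa using hx⟩
  | succ n ih =>
    obtain ⟨u, rfl, hu⟩ := ih
    obtain ⟨j, hj, hju⟩ :=
      (hinf (x ⊓ u.inf b) inf_le_left (mt disjoint_iff.2 hu)).exists_notMem_finset u
    refine ⟨insert j u, Finset.card_insert_of_notMem hju, ?_⟩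
    rwa [Finset.inf_insert, inf_comm, ← disjoint_assoc]

theorem ChainCondition.exists_not_inf_le_antitone {B ι : Type u} [BooleanAlgebra B] [Infinite ι]
    (hcc : ChainCondition B #ι) {c : ℕ → B} (hc : Antitone c) {b : ι → B}
    (hb : ∀ i, ∃ n, ¬ b i ≤ c n) :
    ∃ u : Finset ι, u.Nonempty ∧ ¬ u.inf b ≤ c u.card := by
  obtain ⟨i, hi⟩ := hcc.exists_forall_le_infinite_not_disjoint b
  obtain ⟨n, hn⟩ := hb i
  obtain ⟨u, hu, hmeet⟩ := exists_card_eq_not_disjoint_inf (mt sdiff_eq_bot_iff.1 hn)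
    (fun y hy => hi y (hy.trans sdiff_le)) (n + 1)
  refine ⟨u, Finset.card_pos.1 (by lia), fun hle => hmeet ?_⟩
  have hle_n : u.inf b ≤ c n := hle.trans (hc (by lia))
  exact disjoint_sdiff_self_left.mono_right hle_n

/-- `ℵ₁`-completeness of a set `F`, meant for filters: every countable subset of `F` has a lower
bound in `F`. Lower bounds instead of infima make the notion meaningful in any preorder. -/
def IsCountablyComplete {P : Type*} [Preorder P] (F : Set P) : Prop :=
  ∀ C : Set P, C.Countable → C ⊆ F → ∃ x ∈ F, x ∈ lowerBounds C

theorem isCountablyComplete_iff_sInf_mem {P : Type*} [CompleteSemilatticeInf P] {F : PFilter P} :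
    IsCountablyComplete (F : Set P) ↔
      ∀ C : Set P, C.Countable → C ⊆ F → sInf C ∈ (F : Set P) := by
  refine forall₃_congr fun C _ _ => ⟨?_, fun h => ⟨sInf C, h, fun _ => sInf_le⟩⟩
  rintro ⟨x, hxF, hx⟩
  exact PFilter.mem_of_le (le_sInf hx) hxF

theorem exists_antitone_of_not_isCountablyComplete {P : Type*} [SemilatticeInf P] [OrderTop P]
    {F : PFilter P} (hF : ¬ IsCountablyComplete (F : Set P)) :
    ∃ c : ℕ → P, Antitone c ∧ (∀ n, c n ∈ F) ∧ ∀ x ∈ F, ∃ n, ¬ x ≤ c n := by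
  simp only [IsCountablyComplete, not_forall] at hF
  obtain ⟨C, hC, hCF, hlower⟩ := hF
  have hne : C.Nonempty := by
    by_contra! rfl
    exact hlower ⟨⊤, PFilter.top_mem, by simp⟩
  obtain ⟨e, rfl⟩ := hC.exists_eq_range hne
  refine ⟨fun n => (Finset.range n).inf e, fun m n hmn => ?_, fun n => ?_, fun x hxF => ?_⟩
  · exact Finset.inf_mono (Finset.range_mono hmn)
  · exact Finset.inf_mem _ PFilter.top_mem (fun _ hx _ hy => PFilter.inf_mem hx hy) _ _
      fun k _ => hCF (Set.mem_range_self k)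
  · by_contra! hle
    refine hlower ⟨x, hxF, ?_⟩
    rintro _ ⟨n, rfl⟩
    exact (hle (n + 1)).trans (Finset.inf_le (Finset.self_mem_range_succ n))

theorem isPFilter_of_inf_mem {P : Type*} [SemilatticeInf P] {F : Set P} (hne : F.Nonempty)
    (hup : ∀ x ∈ F, ∀ y, x ≤ y → y ∈ F) (hinf : ∀ x ∈ F, ∀ y ∈ F, x ⊓ y ∈ F) : IsPFilter F :=
  .of_def hne (fun x hx y hy => ⟨x ⊓ y, hinf x hx y hy, inf_le_left, inf_le_right⟩)
    fun hxy hx => hup _ hx _ hxy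

theorem stmt5_general {B ι : Type u} [BooleanAlgebra B] [Infinite ι]
    (hcc : ChainCondition B #ι) (F : PFilter B) (hF : ¬ IsCountablyComplete (F : Set B)) :
    ∃ f : Finset ι → B,
      (∀ u, f u ∈ F) ∧
      Antitone f ∧
      ¬ ∃ b : ι → B, (∀ i, b i ∈ F) ∧ ∀ u : Finset ι, u.Nonempty → u.inf b ≤ f u := by
  obtain ⟨c, hc, hcF, hlower⟩ := exists_antitone_of_not_isCountablyComplete hF
  refine ⟨fun u => c u.card, fun u => hcF _, hc.comp_monotone Finset.card_mono, ?_⟩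
  rintro ⟨b, hbF, hb⟩
  obtain ⟨u, hne, hu⟩ := hcc.exists_not_inf_le_antitone hc fun i => hlower (b i) (hbF i)
  exact hu (hb u hne)

/-- **Theorem 7.2 (a `μ`-c.c. quotient blocks flexibility).** Let `μ` be regular uncountable,
`B` a complete Boolean algebra with the `μ`-c.c., and `D` an ultrafilter on `B` that is not
`ℵ₁`-complete. Then there is a monotone (order-reversing) map `f` from finite subsets of `μ`
into `D` admitting no multiplicative refinement inside `D`. -/
theorem stmt5 {B : Type u} [CompleteBooleanAlgebra B] (μ : Cardinal.{u})
    (hreg : μ.IsRegular) (hunc : Cardinal.aleph0 < μ)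
    (hcc : ∀ A : Set B, (∀ a ∈ A, a ≠ ⊥) → A.Pairwise (fun x y => x ⊓ y = ⊥) →
      Cardinal.mk A < μ)
    (D : Set B)
    (hbot : ⊥ ∉ D)
    (hup : ∀ x ∈ D, ∀ y : B, x ≤ y → y ∈ D)
    (hinf : ∀ x ∈ D, ∀ y ∈ D, x ⊓ y ∈ D)
    (hult : ∀ x : B, x ∈ D ∨ xᶜ ∈ D)
    (hnc : ¬ ∀ C : Set B, C.Countable → C ⊆ D → sInf C ∈ D)
    {ι : Type u} (hι : Cardinal.mk ι = μ) :
    ∃ f : Finset ι → B,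
      (∀ u : Finset ι, f u ∈ D) ∧
      (∀ u v : Finset ι, u ⊆ v → f v ≤ f u) ∧
      ¬ ∃ b : ι → B, (∀ i, b i ∈ D) ∧
        ∀ u : Finset ι, u.Nonempty → u.inf b ≤ f u := by
  have : Infinite ι := infinite_iff.2 (hι ▸ hunc.le)
  have hD : IsPFilter D := isPFilter_of_inf_mem ⟨_, (hult ⊥).resolve_left hbot⟩ hup hinf
  exact stmt5_general (chainCondition_iff_inf_eq_bot.2 (hι ▸ hcc)) hD.toPFilter
    (mt isCountablyComplete_iff_sInf_mem.1 hnc)
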